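/- arXiv:1911.04976 — 2 statements merged into one kernel-verified Lean document; each statement's English description precedes it below -/
import Mathlib

section
/- Let ρ be a generator of Gal(L/k) and let ρ̃ := ρ ⊗ id_K be the induced k-algebra automorphism of LK. Then for every ν ∈ K, the map (l, x) ↦ (ρ(l), ρ̃(x)) of L × LK is a k-linear bijection that fixes the base point (1, 0) and preserves the Tits-process norm form with parameters u = 1, μ = ν; that is, N_{1,ν}(ρ(l), ρ̃(x)) = N_{1,ν}(l, x) for all l ∈ L and x ∈ LK. -/
open scoped TensorProduct

attribute [local instance] Algebra.TensorProduct.rightAlgebra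

/-- The Tits-process norm form `N_{u,μ}` on `L × (L ⊗[k] K)`:
`N_{u,μ}(l, x) = N_{L/k}(l) + Tr_{K/k}(μ · N_{LK/K}(x)) − Tr_{LK/k}((l⊗1)·x·(u⊗1)·x*)`,
where `x* = (id_L ⊗ ι) x`. -/
noncomputable def titsNorm (k : Type*) {L K : Type*} [Field k] [Field L] [Field K]
    [Algebra k L] [Algebra k K] (ι : K ≃ₐ[k] K) (u : L) (μ : K)
    (l : L) (x : L ⊗[k] K) : k :=
  Algebra.norm k l + Algebra.trace k K (μ * Algebra.norm K x)
    - Algebra.trace k (L ⊗[k] K)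
        ((l ⊗ₜ[k] (1 : K)) * x * (u ⊗ₜ[k] (1 : K)) *
          (Algebra.TensorProduct.congr (AlgEquiv.refl : L ≃ₐ[k] L) ι x))

/-- The map `(l, x) ↦ (ρ(l), (ρ ⊗ id_K)(x))` on `L × (L ⊗[k] K)`. -/
noncomputable def rhoProdMap {k L K : Type*} [Field k] [Field L] [Field K]
    [Algebra k L] [Algebra k K] (ρ : L ≃ₐ[k] L) :
    L × (L ⊗[k] K) → L × (L ⊗[k] K) :=
  fun p => (ρ p.1, Algebra.TensorProduct.congr ρ (AlgEquiv.refl : K ≃ₐ[k] K) p.2)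

theorem tensorCongr_left_right_comm {R A A' B B' : Type*} [CommSemiring R] [Semiring A]
    [Semiring A'] [Semiring B] [Semiring B'] [Algebra R A] [Algebra R A'] [Algebra R B]
    [Algebra R B'] (ρ : A ≃ₐ[R] A') (σ : B ≃ₐ[R] B') (x : A ⊗[R] B) :
    Algebra.TensorProduct.congr (AlgEquiv.refl : A' ≃ₐ[R] A') σ
        (Algebra.TensorProduct.congr ρ (AlgEquiv.refl : B ≃ₐ[R] B) x) =
      Algebra.TensorProduct.congr ρ (AlgEquiv.refl : B' ≃ₐ[R] B')
        (Algebra.TensorProduct.congr (AlgEquiv.refl : A ≃ₐ[R] A) σ x) := by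
  simp only [← AlgEquiv.trans_apply, ← Algebra.TensorProduct.congr_trans]
  rfl

theorem norm_tensorCongr_left {R A A' B : Type*} [CommRing R] [Ring A] [Ring A'] [CommRing B]
    [Algebra R A] [Algebra R A'] [Algebra R B] (ρ : A ≃ₐ[R] A') (x : A ⊗[R] B) :
    Algebra.norm B (Algebra.TensorProduct.congr ρ (AlgEquiv.refl : B ≃ₐ[R] B) x) =
      Algebra.norm B x := by
  let ρB := Algebra.TensorProduct.congr ρ (AlgEquiv.refl : B ≃ₐ[R] B)
  have ρB_algebraMap (b : B) : ρB (algebraMap B (A ⊗[R] B) b) = algebraMap B (A' ⊗[R] B) b := by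
    simp [ρB, Algebra.TensorProduct.right_algebraMap_apply]
  exact Algebra.norm_eq_of_algEquiv (AlgEquiv.ofRingEquiv (f := ρB.toRingEquiv) ρB_algebraMap) x

section TitsNorm

variable {k L L' K : Type*} [Field k] [Field L] [Field L'] [Field K]
  [Algebra k L] [Algebra k L'] [Algebra k K]

theorem titsNorm_congr (ι : K ≃ₐ[k] K) (ρ : L ≃ₐ[k] L') (u : L) (μ : K) (l : L) (x : L ⊗[k] K) :
    titsNorm k ι (ρ u) μ (ρ l) (Algebra.TensorProduct.congr ρ (AlgEquiv.refl : K ≃ₐ[k] K) x) =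
      titsNorm k ι u μ l x := by
  let ρK := Algebra.TensorProduct.congr ρ (AlgEquiv.refl : K ≃ₐ[k] K)
  have trace_term :
      Algebra.trace k (L' ⊗[k] K) ((ρ l ⊗ₜ[k] (1 : K)) * ρK x * (ρ u ⊗ₜ[k] (1 : K)) *
          Algebra.TensorProduct.congr (AlgEquiv.refl : L' ≃ₐ[k] L') ι (ρK x)) =
        Algebra.trace k (L ⊗[k] K) ((l ⊗ₜ[k] (1 : K)) * x * (u ⊗ₜ[k] (1 : K)) *
          Algebra.TensorProduct.congr (AlgEquiv.refl : L ≃ₐ[k] L) ι x) := by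
    have ρK_tmul_one (a : L) : ρ a ⊗ₜ[k] (1 : K) = ρK (a ⊗ₜ[k] 1) := by simp [ρK]
    rw [tensorCongr_left_right_comm, ρK_tmul_one, ρK_tmul_one, ← map_mul, ← map_mul, ← map_mul,
      Algebra.trace_eq_of_algEquiv]
  unfold titsNorm
  rw [Algebra.norm_eq_of_algEquiv, norm_tensorCongr_left, trace_term]

theorem rhoProdMap_eq_coe_prodCongr (ρ : L ≃ₐ[k] L) :
    rhoProdMap (K := K) ρ = ⇑(ρ.toLinearEquiv.prodCongr
      (Algebra.TensorProduct.congr ρ (AlgEquiv.refl : K ≃ₐ[k] K)).toLinearEquiv) :=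
  rfl

end TitsNorm

theorem titsNorm_invariant_under_generator_general
    (k L K : Type*) [Field k] [Field L] [Field K] [Algebra k L] [Algebra k K]
    [FiniteDimensional k L] [FiniteDimensional k K]
    (ι : K ≃ₐ[k] K) (ρ : L ≃ₐ[k] L) (u : L) (ν : K) :
    Function.Bijective (rhoProdMap (K := K) ρ) ∧
    (∀ p q : L × (L ⊗[k] K), rhoProdMap (K := K) ρ (p + q)
        = rhoProdMap (K := K) ρ p + rhoProdMap (K := K) ρ q) ∧
    (∀ (c : k) (p : L × (L ⊗[k] K)), rhoProdMap (K := K) ρ (c • p)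
        = c • rhoProdMap (K := K) ρ p) ∧
    rhoProdMap (K := K) ρ ((1 : L), (0 : L ⊗[k] K)) = ((1 : L), (0 : L ⊗[k] K)) ∧
    (∀ (l : L) (x : L ⊗[k] K),
      titsNorm k ι (ρ u) ν (ρ l)
          (Algebra.TensorProduct.congr ρ (AlgEquiv.refl : K ≃ₐ[k] K) x)
        = titsNorm k ι u ν l x) := by
  refine ⟨?bijective, ?map_add, ?map_smul, ?map_basePoint, titsNorm_congr ι ρ u ν⟩
  case bijective => exact rhoProdMap_eq_coe_prodCongr (K := K) ρ ▸ LinearEquiv.bijective _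
  case map_add => exact rhoProdMap_eq_coe_prodCongr (K := K) ρ ▸ map_add _
  case map_smul => exact rhoProdMap_eq_coe_prodCongr (K := K) ρ ▸ map_smul _
  case map_basePoint => exact Prod.ext (map_one ρ) (map_zero _)

/-- if `ρ` generates `Gal(L/k)` (with `L/k` cyclic cubic, `K/k` quadratic Galois
with nontrivial automorphism `ι`), then for every `ν ∈ K` the map
`(l, x) ↦ (ρ(l), (ρ ⊗ id_K)(x))` is a `k`-linear bijection fixing the base point `(1, 0)`
and preserving the Tits-process norm form with parameters `u = 1`, `μ = ν`. -/
theorem titsNorm_invariant_under_generator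
    (k L K : Type*) [Field k] [Field L] [Field K] [Algebra k L] [Algebra k K]
    [IsGalois k L] (hL : Module.finrank k L = 3)
    [IsGalois k K] (hK : Module.finrank k K = 2)
    (ι : K ≃ₐ[k] K) (hι : ι ≠ AlgEquiv.refl)
    (ρ : L ≃ₐ[k] L) (hρ : ∀ σ : L ≃ₐ[k] L, σ ∈ Subgroup.zpowers ρ)
    (ν : K) :
    Function.Bijective (rhoProdMap (K := K) ρ) ∧
    (∀ p q : L × (L ⊗[k] K), rhoProdMap (K := K) ρ (p + q)
        = rhoProdMap (K := K) ρ p + rhoProdMap (K := K) ρ q) ∧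
    (∀ (c : k) (p : L × (L ⊗[k] K)), rhoProdMap (K := K) ρ (c • p)
        = c • rhoProdMap (K := K) ρ p) ∧
    rhoProdMap (K := K) ρ ((1 : L), (0 : L ⊗[k] K)) = ((1 : L), (0 : L ⊗[k] K)) ∧
    (∀ (l : L) (x : L ⊗[k] K),
      titsNorm k ι 1 ν (ρ l) (Algebra.TensorProduct.congr ρ (AlgEquiv.refl : K ≃ₐ[k] K) x)
        = titsNorm k ι 1 ν l x) := by
  have : FiniteDimensional k L := Module.finite_of_finrank_eq_succ hL
  have : FiniteDimensional k K := Module.finite_of_finrank_eq_succ hK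
  simpa only [map_one] using titsNorm_invariant_under_generator_general k L K ι ρ 1 ν
end

section
/- For all u, v ∈ L^×, all μ ∈ K, and all l ∈ L, x ∈ LK, one has N_{u·v^#, N_{L/k}(v)·μ}(l·v, x) = N_{L/k}(v) · N_{u,μ}(l, x). (This expresses that the k-linear bijection (l, x) ↦ (l·v, x) of L × LK is a norm similarity with multiplier N_{L/k}(v), realizing the isomorphism of the v-isotope J(LK, *, u, μ)^{(v)} with J(LK, *, u·v^#, N_{L/k}(v)·μ).) -/
open scoped TensorProduct

attribute [local instance] Algebra.TensorProduct.rightAlgebra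

theorem trace_algebraMap_mul {R A : Type*} [CommRing R] [CommRing A] [Algebra R A]
    (c : R) (a : A) :
    Algebra.trace R A (algebraMap R A c * a) = c * Algebra.trace R A a := by
  rw [← Algebra.smul_def, map_smul, smul_eq_mul]

theorem mul_tmul_one_mul_mul_tmul_one_of_mul_eq_algebraMap {R A B : Type*}
    [CommSemiring R] [CommSemiring A] [CommSemiring B] [Algebra R A] [Algebra R B]
    {v w : A} {c : R} (hvw : v * w = algebraMap R A c) (a b : A) (x : A ⊗[R] B) :
    ((a * v) ⊗ₜ[R] (1 : B)) * x * ((b * w) ⊗ₜ[R] (1 : B)) =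
      algebraMap R (A ⊗[R] B) c * ((a ⊗ₜ[R] (1 : B)) * x * (b ⊗ₜ[R] (1 : B))) := by
  have tmul_mul (r s : A) : (r * s) ⊗ₜ[R] (1 : B) = (r ⊗ₜ 1) * (s ⊗ₜ 1) := by
    rw [Algebra.TensorProduct.tmul_mul_tmul, one_mul]
  have hvw_tmul : (v ⊗ₜ[R] (1 : B)) * (w ⊗ₜ 1) = algebraMap R (A ⊗[R] B) c := by
    rw [← tmul_mul, hvw, Algebra.TensorProduct.algebraMap_apply]
  rw [tmul_mul, tmul_mul, ← hvw_tmul]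
  ring

theorem titsNorm_isotope_similarity_general
    {k L K : Type*} [Field k] [Field L] [Field K] [Algebra k L] [Algebra k K]
    [FiniteDimensional k L] [FiniteDimensional k K] (ι : K ≃ₐ[k] K)
    (u : L) {v : L} (hv : v ≠ 0) (μ : K) (l : L) (x : L ⊗[k] K) :
    titsNorm k ι (u * (algebraMap k L (Algebra.norm k v) * v⁻¹))
        (algebraMap k K (Algebra.norm k v) * μ) (l * v) x
      = Algebra.norm k v * titsNorm k ι u μ l x := by
  have mul_adjoint : v * (algebraMap k L (Algebra.norm k v) * v⁻¹) =
      algebraMap k L (Algebra.norm k v) := by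
    rw [mul_left_comm, mul_inv_cancel₀ hv, mul_one]
  unfold titsNorm
  rw [mul_tmul_one_mul_mul_tmul_one_of_mul_eq_algebraMap mul_adjoint,
    mul_assoc (algebraMap _ _ _), mul_assoc (algebraMap _ _ _),
    trace_algebraMap_mul, trace_algebraMap_mul, map_mul]
  ring

/-- the map `(l, x) ↦ (l·v, x)` is a norm similarity with multiplier
`N_{L/k}(v)` from `N_{u,μ}` to `N_{u·v^#, N_{L/k}(v)·μ}`, where `v^# = N_{L/k}(v)·v⁻¹`. -/
theorem titsNorm_isotope_similarity
    (k L K : Type*) [Field k] [Field L] [Field K] [Algebra k L] [Algebra k K]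
    (hL : Module.finrank k L = 3)
    [IsGalois k K] (hK : Module.finrank k K = 2)
    (ι : K ≃ₐ[k] K) (hι : ι ≠ AlgEquiv.refl)
    (u v : L) (hu : u ≠ 0) (hv : v ≠ 0) (μ : K) (l : L) (x : L ⊗[k] K) :
    titsNorm k ι (u * (algebraMap k L (Algebra.norm k v) * v⁻¹))
        (algebraMap k K (Algebra.norm k v) * μ) (l * v) x
      = Algebra.norm k v * titsNorm k ι u μ l x := by
  have : FiniteDimensional k L := .of_finrank_pos (by lia)
  have : FiniteDimensional k K := .of_finrank_pos (by lia)
  exact titsNorm_isotope_similarity_general ι u hv μ l x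
end
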